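/- Uniform bound for the Coulomb potential term: Let v : ℝ³ → ℂ be a Schwartz function and define g(v)(x) = ∫_{ℝ³} |v(y)|²/(4π|x−y|) dy. Then for every x ∈ ℝ³ the integral converges, g(v)(x) ≥ 0, and g(v)(x) ≤ (2π)^{−1} ‖v‖_{L²(ℝ³)} ‖∇v‖_{L²(ℝ³)}, where ‖∇v‖_{L²} is the L² norm of the Euclidean norm of the gradient of v. -/

import Mathlib

/-!
The vector field `z ↦ z / |z|` on `ℝ³` has divergence `2 / |z|`. Integrating it by parts against
`|v|²` and applying the Cauchy–Schwarz inequality, first pointwise and then in `L²`, gives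
`∫ |v(y)|² / |y - x| dy ≤ ‖v‖₂ ‖∇v‖₂`, which is twice as good as required.

To avoid the singularity at `y = x`, the field is replaced by `z / s` with `s = √(|z|² + ε²)`, which
is smooth, bounded by `1`, and has divergence `3 / s - |z|² / s³ ≥ 2 / s`
(`inv_regNorm_le_divergence`). This yields the bound uniformly in `ε`
(`integral_sq_div_regNorm_le`), and Fatou's lemma for `ε → 0` gives both the convergence of the
Coulomb integral and the estimate (`lintegral_sq_div_norm_le`).
-/

noncomputable section
open MeasureTheory Real
open scoped RealInnerProductSpace

/-- Physical space `ℝ³` with the Euclidean norm. -/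
abbrev R3 : Type := EuclideanSpace ℝ (Fin 3)

/-- Spatial partial derivative `∂ₖ` of a complex-valued function on `ℝ³`. -/
def pdC (k : Fin 3) (f : R3 → ℂ) (x : R3) : ℂ := fderiv ℝ f x (EuclideanSpace.single k 1)

/-- Spatial partial derivative `∂ₖ` of a real-valued function on `ℝ³`. -/
def pdR (k : Fin 3) (f : R3 → ℝ) (x : R3) : ℝ := fderiv ℝ f x (EuclideanSpace.single k 1)

/-- Laplacian of a complex-valued function on `ℝ³`. -/
def lapC (f : R3 → ℂ) (x : R3) : ℂ := ∑ k : Fin 3, pdC k (pdC k f) x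

/-- Laplacian of a real-valued function on `ℝ³`. -/
def lapR (f : R3 → ℝ) (x : R3) : ℝ := ∑ k : Fin 3, pdR k (pdR k f) x

/-- Divergence `∇·A` of a vector field on `ℝ³`. -/
def divg (A : R3 → R3) (x : R3) : ℝ := ∑ k : Fin 3, pdR k (fun y => A y k) x

/-- Component `k` of the covariant gradient `∇_A u = ∇u − iAu`. -/
def covGrad (A : R3 → R3) (u : R3 → ℂ) (k : Fin 3) (x : R3) : ℂ :=
  pdC k u x - Complex.I * (A x k : ℂ) * u x

/-- Covariant Laplacian `Δ_A u = Δu − 2iA·∇u − i(∇·A)u − |A|²u`. -/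
def covLap (A : R3 → R3) (u : R3 → ℂ) (x : R3) : ℂ :=
  lapC u x - 2 * Complex.I * (∑ k : Fin 3, (A x k : ℂ) * pdC k u x)
    - Complex.I * (divg A x : ℂ) * u x - ((∑ k : Fin 3, (A x k)^2 : ℝ) : ℂ) * u x

/-- Time derivative `∂_t` of a time-dependent complex-valued function. -/
def dtC (f : ℝ → R3 → ℂ) (t : ℝ) (x : R3) : ℂ := deriv (fun s => f s x) t

/-- Time derivative `∂_t` of a time-dependent real-valued function. -/
def dtR (f : ℝ → R3 → ℝ) (t : ℝ) (x : R3) : ℝ := deriv (fun s => f s x) t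

open Filter Topology

/-! ### The regularised radial field -/

/-- The regularised norm `√(|z|² + ε²)` on `ℝ³`. -/
def regNorm (ε : ℝ) (z : R3) : ℝ := √(‖z‖ ^ 2 + ε ^ 2)

lemma regNorm_sq (ε : ℝ) (z : R3) : regNorm ε z ^ 2 = ‖z‖ ^ 2 + ε ^ 2 :=
  Real.sq_sqrt (by positivity)

lemma le_regNorm (ε : ℝ) (z : R3) : ε ≤ regNorm ε z :=
  Real.le_sqrt_of_sq_le (by nlinarith [sq_nonneg ‖z‖])

lemma norm_le_regNorm (ε : ℝ) (z : R3) : ‖z‖ ≤ regNorm ε z :=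
  Real.le_sqrt_of_sq_le (by nlinarith [sq_nonneg ε])

lemma regNorm_pos {ε : ℝ} (hε : 0 < ε) (z : R3) : 0 < regNorm ε z :=
  hε.trans_le (le_regNorm ε z)

lemma continuous_regNorm (ε : ℝ) : Continuous (regNorm ε) := by
  unfold regNorm
  fun_prop

lemma abs_coord_le_norm (z : R3) (k : Fin 3) : |z k| ≤ ‖z‖ := by
  simpa using PiLp.norm_apply_le z k

lemma sum_coord_sq (z : R3) : ∑ k : Fin 3, z k ^ 2 = ‖z‖ ^ 2 := by
  simp [EuclideanSpace.norm_sq_eq]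

/-- The partial derivative `∂ₖ (zₖ / s)` of the regularised radial field, where
`s = √(|z|² + ε²)`. -/
def regFieldDeriv (ε : ℝ) (k : Fin 3) (z : R3) : ℝ :=
  (regNorm ε z)⁻¹ - z k ^ 2 / regNorm ε z ^ 3

lemma hasLineDerivAt_regField {ε : ℝ} (hε : 0 < ε) (x y : R3) (k : Fin 3) :
    HasLineDerivAt ℝ (fun y : R3 => (y - x) k / regNorm ε (y - x)) (regFieldDeriv ε k (y - x)) y
      (EuclideanSpace.single k 1) := by
  unfold HasLineDerivAt
  have hs := regNorm_pos hε (y - x)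
  have h0 : HasDerivAt (fun t : ℝ => y + t • EuclideanSpace.single k (1 : ℝ) - x)
      (EuclideanSpace.single k (1 : ℝ)) 0 := by
    simpa using (((hasDerivAt_id (0 : ℝ)).smul_const
      (EuclideanSpace.single k (1 : ℝ))).const_add y).sub_const x
  have h1 : HasDerivAt (fun t : ℝ => (y + t • EuclideanSpace.single k (1 : ℝ) - x) k) 1 0 := by
    have : (fun t : ℝ => (y + t • EuclideanSpace.single k (1 : ℝ) - x) k)
        = fun t : ℝ => (y k + t) - x k := by
      funext t
      simp
    rw [this]
    exact ((hasDerivAt_id (0 : ℝ)).const_add (y k)).sub_const (x k)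
  have h2 : HasDerivAt (fun t : ℝ => regNorm ε (y + t • EuclideanSpace.single k (1 : ℝ) - x))
      ((y - x) k / regNorm ε (y - x)) 0 := by
    have h3 := (h0.norm_sq.add_const (ε ^ 2)).sqrt (by positivity)
    convert! h3 using 1
    simp only [regNorm, zero_smul, add_zero, EuclideanSpace.inner_single_right]
    simp
    ring
  have h3 := h1.div h2 (by simpa using hs.ne')
  convert! h3 using 1
  simp only [zero_smul, add_zero, regFieldDeriv]
  field_simp

lemma abs_regField_le {ε : ℝ} (hε : 0 < ε) (k : Fin 3) (z : R3) :
    |z k / regNorm ε z| ≤ 1 := by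
  have hs := regNorm_pos hε z
  rw [abs_div, abs_of_pos hs, div_le_one hs]
  exact (abs_coord_le_norm z k).trans (norm_le_regNorm ε z)

lemma abs_regFieldDeriv_le {ε : ℝ} (hε : 0 < ε) (k : Fin 3) (z : R3) :
    |regFieldDeriv ε k z| ≤ ε⁻¹ := by
  have hs := regNorm_pos hε z
  have h1 : z k ^ 2 ≤ regNorm ε z ^ 2 :=
    sq_le_sq' (by linarith [neg_abs_le (z k), abs_coord_le_norm z k, norm_le_regNorm ε z])
      (by linarith [le_abs_self (z k), abs_coord_le_norm z k, norm_le_regNorm ε z])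
  have h2 : z k ^ 2 / regNorm ε z ^ 3 ≤ (regNorm ε z)⁻¹ := by
    rw [div_le_iff₀ (by positivity)]
    calc z k ^ 2 ≤ regNorm ε z ^ 2 := h1
      _ = (regNorm ε z)⁻¹ * regNorm ε z ^ 3 := by field_simp
  have h3 : 0 ≤ z k ^ 2 / regNorm ε z ^ 3 := by positivity
  have h4 : (regNorm ε z)⁻¹ ≤ ε⁻¹ := inv_anti₀ hε (le_regNorm ε z)
  rw [regFieldDeriv, abs_of_nonneg (by linarith)]
  linarith

lemma inv_regNorm_le_divergence {ε : ℝ} (hε : 0 < ε) (z : R3) :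
    2 * (regNorm ε z)⁻¹ ≤ ∑ k : Fin 3, regFieldDeriv ε k z := by
  have hs := regNorm_pos hε z
  have h1 : ∑ k : Fin 3, regFieldDeriv ε k z
      = 3 * (regNorm ε z)⁻¹ - ‖z‖ ^ 2 / regNorm ε z ^ 3 := by
    rw [← sum_coord_sq]
    simp only [regFieldDeriv, Fin.sum_univ_three]
    ring
  have h2 : ‖z‖ ^ 2 / regNorm ε z ^ 3 ≤ (regNorm ε z)⁻¹ := by
    rw [div_le_iff₀ (by positivity)]
    calc ‖z‖ ^ 2 ≤ regNorm ε z ^ 2 := by nlinarith [regNorm_sq ε z, sq_nonneg ε]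
      _ = (regNorm ε z)⁻¹ * regNorm ε z ^ 3 := by field_simp
  linarith

/-! ### The gradient of a Schwartz function -/

lemma hasLineDerivAt_norm_sq (v : SchwartzMap R3 ℂ) (y : R3) (k : Fin 3) :
    HasLineDerivAt ℝ (fun y => ‖v y‖ ^ 2) (2 * inner ℝ (v y) (pdC k (fun z => v z) y)) y
      (EuclideanSpace.single k 1) := by
  have h := (v.differentiableAt (x := y)).hasFDerivAt.norm_sq.hasLineDerivAt
    (EuclideanSpace.single k 1)
  convert! h using 1
  simp [pdC, two_nsmul, two_mul]

lemma memLp_pdC (v : SchwartzMap R3 ℂ) (k : Fin 3) : MemLp (pdC k (fun z => v z)) 2 := by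
  have h := (LineDeriv.lineDerivOp (EuclideanSpace.single k (1 : ℝ)) v).memLp 2
    (volume : Measure R3)
  exact h

/-- The Euclidean norm `|∇v|` of the gradient. -/
def gradNorm (v : R3 → ℂ) (y : R3) : ℝ := √(∑ k : Fin 3, ‖pdC k v y‖ ^ 2)

lemma memLp_gradNorm (v : SchwartzMap R3 ℂ) : MemLp (gradNorm (fun z => v z)) 2 := by
  have hm : AEStronglyMeasurable (gradNorm (fun z => v z)) := by
    have h k := (memLp_pdC v k).aestronglyMeasurable.aemeasurable
    apply AEMeasurable.aestronglyMeasurable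
    unfold gradNorm
    fun_prop
  rw [memLp_two_iff_integrable_sq hm]
  have h2 : (fun y => gradNorm (fun z => v z) y ^ 2)
      = fun y => ∑ k : Fin 3, ‖pdC k (fun z => v z) y‖ ^ 2 := by
    funext y
    exact Real.sq_sqrt (by positivity)
  rw [h2]
  exact integrable_finsetSum _ fun k _ => (memLp_pdC v k).integrable_norm_pow two_ne_zero

lemma integrable_norm_sq (v : SchwartzMap R3 ℂ) : Integrable (fun y => ‖v y‖ ^ 2) :=
  (v.memLp 2).integrable_norm_pow two_ne_zero

/-- Cauchy–Schwarz in `ℝ³` for the regularised radial field, which has length at most `1`. -/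
lemma neg_sum_regField_mul_le {ε : ℝ} (hε : 0 < ε) (v : R3 → ℂ) (z y : R3) :
    -∑ k : Fin 3, z k / regNorm ε z * (2 * inner ℝ (v y) (pdC k v y))
      ≤ 2 * (‖v y‖ * gradNorm v y) := by
  have hs := regNorm_pos hε z
  have h1 : -∑ k : Fin 3, z k / regNorm ε z * (2 * inner ℝ (v y) (pdC k v y))
      ≤ 2 * ‖v y‖ * ∑ k : Fin 3, |z k / regNorm ε z| * ‖pdC k v y‖ := by
    rw [← Finset.sum_neg_distrib, Finset.mul_sum]
    refine Finset.sum_le_sum fun k _ => ?_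
    refine (neg_le_abs _).trans ?_
    rw [abs_mul, abs_mul, abs_two]
    calc _ ≤ |z k / regNorm ε z| * (2 * (‖v y‖ * ‖pdC k v y‖)) := by
          gcongr
          exact abs_real_inner_le_norm _ _
      _ = _ := by ring
  have h2 : ∑ k : Fin 3, |z k / regNorm ε z| * ‖pdC k v y‖ ≤ gradNorm v y := by
    refine (Real.sum_mul_le_sqrt_mul_sqrt _ _ _).trans ?_
    have h3 : √(∑ k : Fin 3, |z k / regNorm ε z| ^ 2) ≤ 1 := by
      refine (Real.sqrt_le_iff.2 ⟨zero_le_one, ?_⟩)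
      rw [one_pow]
      simp only [sq_abs, div_pow]
      rw [← Finset.sum_div, sum_coord_sq, div_le_one (by positivity), regNorm_sq]
      nlinarith [sq_nonneg ε]
    exact mul_le_of_le_one_left (Real.sqrt_nonneg _) h3
  calc _ ≤ _ := h1
    _ ≤ 2 * ‖v y‖ * gradNorm v y := by gcongr
    _ = _ := by ring

lemma integral_norm_mul_gradNorm_le (v : SchwartzMap R3 ℂ) :
    ∫ y, ‖v y‖ * gradNorm (fun z => v z) y
      ≤ √(∫ y, ‖v y‖ ^ 2) * √(∫ y, gradNorm (fun z => v z) y ^ 2) := by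
  have h := integral_mul_le_Lp_mul_Lq_of_nonneg (μ := volume) Real.HolderConjugate.two_two
    (f := fun y => ‖v y‖) (g := gradNorm (fun z => v z))
    (ae_of_all _ fun y => norm_nonneg _) (ae_of_all _ fun y => Real.sqrt_nonneg _)
    (by simpa using (v.memLp 2).norm) (by simpa using memLp_gradNorm v)
  simpa [Real.sqrt_eq_rpow] using h

/-! ### The regularised estimate -/

lemma integrable_sq_div_regNorm {ε : ℝ} (hε : 0 < ε) (v : SchwartzMap R3 ℂ) (x : R3) :
    Integrable (fun y => (regNorm ε (y - x))⁻¹ * ‖v y‖ ^ 2) := by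
  refine (integrable_norm_sq v).bdd_mul (c := ε⁻¹) ?_ (ae_of_all _ fun y => ?_)
  · exact (((continuous_regNorm ε).comp (continuous_id.sub continuous_const)).inv₀
      fun y => (regNorm_pos hε _).ne').aestronglyMeasurable
  · rw [Real.norm_of_nonneg (inv_nonneg.2 (regNorm_pos hε _).le)]
    exact inv_anti₀ hε (le_regNorm ε _)

/-- The regularised estimate, with a bound that does not depend on `ε`. -/
lemma integral_sq_div_regNorm_le {ε : ℝ} (hε : 0 < ε) (v : SchwartzMap R3 ℂ) (x : R3) :
    ∫ y, (regNorm ε (y - x))⁻¹ * ‖v y‖ ^ 2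
      ≤ √(∫ y, ‖v y‖ ^ 2) * √(∫ y, gradNorm (fun z => v z) y ^ 2) := by
  have hc : Continuous fun y : R3 => regNorm ε (y - x) :=
    (continuous_regNorm ε).comp (continuous_id.sub continuous_const)
  have hc0 (y : R3) : regNorm ε (y - x) ≠ 0 := (regNorm_pos hε _).ne'
  have hcF (k : Fin 3) : Continuous fun y : R3 => (y - x) k / regNorm ε (y - x) :=
    Continuous.div (by fun_prop) hc hc0
  have hcD (k : Fin 3) : Continuous fun y : R3 => regFieldDeriv ε k (y - x) := by
    unfold regFieldDeriv
    exact (hc.inv₀ hc0).sub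
      (Continuous.div (by fun_prop) (hc.pow 3) fun y => pow_ne_zero 3 (hc0 y))
  have hw := integrable_norm_sq v
  have iD (k : Fin 3) : Integrable (fun y => regFieldDeriv ε k (y - x) * ‖v y‖ ^ 2) :=
    hw.bdd_mul (hcD k).aestronglyMeasurable (ae_of_all _ fun y => abs_regFieldDeriv_le hε k _)
  have iF (k : Fin 3) : Integrable (fun y => (y - x) k / regNorm ε (y - x) * ‖v y‖ ^ 2) :=
    hw.bdd_mul (hcF k).aestronglyMeasurable (ae_of_all _ fun y => abs_regField_le hε k _)
  have iI (k : Fin 3) : Integrable (fun y => inner ℝ (v y) (pdC k (fun z => v z) y)) :=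
    ((v.memLp 2).norm.integrable_mul (memLp_pdC v k).norm).mono'
      ((v.memLp 2).aestronglyMeasurable.inner (𝕜 := ℝ) (memLp_pdC v k).aestronglyMeasurable)
      (ae_of_all _ fun y => norm_inner_le_norm _ _)
  have iG (k : Fin 3) : Integrable (fun y => (y - x) k / regNorm ε (y - x) *
      (2 * inner ℝ (v y) (pdC k (fun z => v z) y))) :=
    ((iI k).const_mul 2).bdd_mul (hcF k).aestronglyMeasurable
      (ae_of_all _ fun y => abs_regField_le hε k _)
  have iVG : Integrable (fun y => ‖v y‖ * gradNorm (fun z => v z) y) :=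
    (v.memLp 2).norm.integrable_mul (memLp_gradNorm v)
  have hibp (k : Fin 3) : ∫ y, regFieldDeriv ε k (y - x) * ‖v y‖ ^ 2
      = -∫ y, (y - x) k / regNorm ε (y - x) *
        (2 * inner ℝ (v y) (pdC k (fun z => v z) y)) := by
    have h := integral_bilinear_hasLineDerivAt_right_eq_neg_left_of_integrable
      (B := ContinuousLinearMap.mul ℝ ℝ) (μ := (volume : Measure R3))
      (iD k) (iG k) (iF k) (fun y _ => hasLineDerivAt_regField hε x y k)
      (fun y _ => hasLineDerivAt_norm_sq v y k)
    simp only [ContinuousLinearMap.mul_apply'] at h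
    linarith
  have key : 2 * ∫ y, (regNorm ε (y - x))⁻¹ * ‖v y‖ ^ 2
      ≤ 2 * ∫ y, ‖v y‖ * gradNorm (fun z => v z) y := by
    calc 2 * ∫ y, (regNorm ε (y - x))⁻¹ * ‖v y‖ ^ 2
        = ∫ y, 2 * ((regNorm ε (y - x))⁻¹ * ‖v y‖ ^ 2) := (integral_const_mul _ _).symm
      _ ≤ ∫ y, ∑ k : Fin 3, regFieldDeriv ε k (y - x) * ‖v y‖ ^ 2 := by
          refine integral_mono ((integrable_sq_div_regNorm hε v x).const_mul 2)
            (integrable_finsetSum _ fun k _ => iD k) fun y => ?_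
          simp only
          rw [← Finset.sum_mul, ← mul_assoc]
          exact mul_le_mul_of_nonneg_right (inv_regNorm_le_divergence hε _) (by positivity)
      _ = ∫ y, -∑ k : Fin 3, (y - x) k / regNorm ε (y - x) *
            (2 * inner ℝ (v y) (pdC k (fun z => v z) y)) := by
          rw [integral_neg, integral_finsetSum _ fun k _ => iD k,
            integral_finsetSum _ fun k _ => iG k, ← Finset.sum_neg_distrib]
          exact Finset.sum_congr rfl fun k _ => hibp k
      _ ≤ ∫ y, 2 * (‖v y‖ * gradNorm (fun z => v z) y) :=
          integral_mono (integrable_finsetSum _ fun k _ => iG k).neg (iVG.const_mul 2)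
            fun y => neg_sum_regField_mul_le hε (fun z => v z) (y - x) y
      _ = _ := integral_const_mul _ _
  have := integral_norm_mul_gradNorm_le v
  linarith

/-! ### Removal of the regularisation -/

/-- Fatou's lemma as `ε → 0` along `ε = 1 / (n + 1)`. -/
lemma lintegral_sq_div_norm_le (v : SchwartzMap R3 ℂ) (x : R3) :
    ∫⁻ y, ENNReal.ofReal (‖v y‖ ^ 2 / ‖x - y‖)
      ≤ ENNReal.ofReal (√(∫ y, ‖v y‖ ^ 2) * √(∫ y, gradNorm (fun z => v z) y ^ 2)) := by
  set C := √(∫ y, ‖v y‖ ^ 2) * √(∫ y, gradNorm (fun z => v z) y ^ 2)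
  let e : ℕ → ℝ := fun n => 1 / ((n : ℝ) + 1)
  have he (n : ℕ) : 0 < e n := Nat.one_div_pos_of_nat
  let f : ℕ → R3 → ENNReal :=
    fun n y => ENNReal.ofReal ((regNorm (e n) (y - x))⁻¹ * ‖v y‖ ^ 2)
  -- At `y = x` the real quotient takes the value `0` and the convergence may fail.
  have hlim : ∀ᵐ y : R3, ENNReal.ofReal (‖v y‖ ^ 2 / ‖x - y‖)
      = liminf (fun n => f n y) atTop := by
    filter_upwards [compl_mem_ae_iff.2 (measure_singleton x)] with y hy
    have hy' : ‖y - x‖ ≠ 0 := norm_ne_zero_iff.2 (sub_ne_zero.2 hy)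
    refine (Tendsto.liminf_eq ?_).symm
    refine ENNReal.tendsto_ofReal ?_
    rw [norm_sub_rev x y, div_eq_inv_mul]
    refine Tendsto.mul_const _ (Tendsto.inv₀ ?_ hy')
    have h : Tendsto (fun n => √(‖y - x‖ ^ 2 + e n ^ 2)) atTop
        (𝓝 √(‖y - x‖ ^ 2 + 0 ^ 2)) :=
      ((tendsto_one_div_add_atTop_nhds_zero_nat.pow 2).const_add _).sqrt
    simpa [regNorm] using h
  rw [lintegral_congr_ae hlim]
  refine (lintegral_liminf_le' fun n =>
    (integrable_sq_div_regNorm (he n) v x).aemeasurable.ennreal_ofReal).trans ?_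
  have hb (n : ℕ) : ∫⁻ y, f n y ≤ ENNReal.ofReal C := by
    rw [← ofReal_integral_eq_lintegral_ofReal (integrable_sq_div_regNorm (he n) v x)
      (ae_of_all _ fun y => mul_nonneg (inv_nonneg.2 (regNorm_pos (he n) _).le) (sq_nonneg _))]
    exact ENNReal.ofReal_le_ofReal (integral_sq_div_regNorm_le (he n) v x)
  exact (liminf_le_liminf (Eventually.of_forall hb)).trans_eq (liminf_const _)

lemma integrable_sq_div_norm (v : SchwartzMap R3 ℂ) (x : R3) :
    Integrable (fun y => ‖v y‖ ^ 2 / ‖x - y‖) := by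
  have hv := v.continuous.measurable
  refine ⟨Measurable.aestronglyMeasurable (by fun_prop), ?_⟩
  rw [hasFiniteIntegral_iff_ofReal (ae_of_all _ fun y => by positivity)]
  exact (lintegral_sq_div_norm_le v x).trans_lt ENNReal.ofReal_lt_top

lemma integral_sq_div_norm_le (v : SchwartzMap R3 ℂ) (x : R3) :
    ∫ y, ‖v y‖ ^ 2 / ‖x - y‖
      ≤ √(∫ y, ‖v y‖ ^ 2) * √(∫ y, gradNorm (fun z => v z) y ^ 2) := by
  rw [← ENNReal.ofReal_le_ofReal_iff (by positivity),
    ofReal_integral_eq_lintegral_ofReal (integrable_sq_div_norm v x)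
      (ae_of_all _ fun y => by positivity)]
  exact lintegral_sq_div_norm_le v x

/-- uniform bound for the Coulomb potential term.  For a Schwartz function `v`,
`g(v)(x) = ∫ |v(y)|²/(4π|x−y|) dy` converges for every `x`, is nonnegative, and is bounded by
`(2π)⁻¹ ‖v‖₂ ‖∇v‖₂`, where `‖∇v‖₂` is the `L²` norm of the Euclidean norm of the gradient. -/
theorem coulomb_potential_uniform_bound (v : SchwartzMap R3 ℂ) :
    (∀ x : R3, Integrable (fun y : R3 => ‖v y‖^2 / (4 * π * ‖x - y‖))) ∧
    (∀ x : R3, 0 ≤ ∫ y : R3, ‖v y‖^2 / (4 * π * ‖x - y‖)) ∧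
    (∀ x : R3, (∫ y : R3, ‖v y‖^2 / (4 * π * ‖x - y‖)) ≤
      (2 * π)⁻¹ * Real.sqrt (∫ y : R3, ‖v y‖^2)
        * Real.sqrt (∫ y : R3, Real.sqrt (∑ k : Fin 3, ‖pdC k (fun z => v z) y‖^2) ^ 2)) := by
  have heq (x : R3) : (fun y : R3 => ‖v y‖ ^ 2 / (4 * π * ‖x - y‖))
      = fun y => (4 * π)⁻¹ * (‖v y‖ ^ 2 / ‖x - y‖) := by
    funext y
    rw [div_eq_mul_inv, div_eq_mul_inv, mul_inv]
    ring
  refine ⟨fun x => ?_, fun x => integral_nonneg fun y => by positivity, fun x => ?_⟩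
  · rw [heq]
    exact (integrable_sq_div_norm v x).const_mul _
  · rw [heq, integral_const_mul, mul_assoc]
    refine mul_le_mul ?_ (integral_sq_div_norm_le v x)
      (integral_nonneg fun y => by positivity) (by positivity)
    exact inv_anti₀ (by positivity) (by linarith [Real.pi_pos])
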